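/- Let 1 ≤ m ≤ n−1, let B ⊂ ℝⁿ be Borel measurable, and let W₀ : ℝⁿ → G(n,m) be Borel measurable. Then the function ℝⁿ → [0,∞], x ↦ ℋ^m(B ∩ (x + W₀(x))), is Borel measurable. -/

import Mathlib

open MeasureTheory Metric Filter
open scoped ENNReal NNReal RealInnerProductSpace Topology

noncomputable section

abbrev En (n : ℕ) : Type := EuclideanSpace ℝ (Fin n)

def projCLM {n : ℕ} (W : Submodule ℝ (En n)) : En n →L[ℝ] En n :=
  W.subtypeL.comp (Submodule.orthogonalProjection W)

def spanW {n m : ℕ} (w : Fin m → En n → En n) (x : En n) : Submodule ℝ (En n) :=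
  Submodule.span ℝ (Set.range fun i => w i x)

def affW {n m : ℕ} (w : Fin m → En n → En n) (x : En n) : Set (En n) :=
  {y | y - x ∈ spanW w x}

def gMap {n k : ℕ} (v : Fin k → En n → En n) (u : En n) (x : En n) : En k :=
  (WithLp.equiv 2 (Fin k → ℝ)).symm fun i => ⟪v i x, x - u⟫

def unitBallVol (m : ℕ) : ℝ≥0∞ := volume (ball (0 : En m) 1)

def phiEW (n m : ℕ) (E : Set (En n)) (w : Fin m → En n → En n) (B : Set (En n)) : ℝ≥0∞ :=
  ∫⁻ x in E, μH[(m : ℝ)] (B ∩ affW w x) ∂volume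

def Y0W (n m : ℕ) (E : Set (En n)) (v : Fin (n - m) → En n → En n) (u : En n) : ℝ≥0∞ :=
  μH[(m : ℝ)] (E ∩ {x | gMap v u x = 0})

def YmW (n m : ℕ) (F : Set (En n)) (v : Fin (n - m) → En n → En n) (u : En n) : ℝ≥0∞ :=
  liminf (fun j : ℕ =>
    (∫⁻ y in closedBall (0 : En (n - m)) (1 / (j + 1)),
        μH[(m : ℝ)] (F ∩ {x | gMap v u x = y}) ∂volume)
      / volume (closedBall (0 : En (n - m)) (1 / (j + 1)))) atTop

def polyball {n m : ℕ} (w : Fin m → En n → En n) (x₀ : En n) (r : ℝ) : Set (En n) :=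
  {x | ‖projCLM (spanW w x₀) (x - x₀)‖ ≤ r ∧ ‖projCLM (spanW w x₀)ᗮ (x - x₀)‖ ≤ r}

/-!
Thicken the part of `a + W` lying in `A` to the set of points whose orthogonal projection to `a + W`
lies in `A` and whose distance to `a + W` is less than `1`. By Fubini along `W ⊕ Wᗮ` its Lebesgue
measure is `ℋ^m (A ∩ (a + W))` times a constant depending only on the dimensions. Membership in the
thickening is a jointly Borel condition on the point and on the parameter of the plane field, so the
Lebesgue measure of the thickening depends measurably on the parameter, by Tonelli.
-/

theorem range_const_add_coe_submodule {R M : Type*} [Ring R] [AddCommGroup M] [Module R M]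
    (W : Submodule R M) (a : M) :
    Set.range (fun w : W => a + (w : M)) = {y | y - a ∈ W} := by
  ext y
  constructor
  · rintro ⟨w, rfl⟩
    simp
  · intro hy
    exact ⟨⟨y - a, hy⟩, add_sub_cancel a y⟩

section UnitTube

open Module

variable {E : Type*} [NormedAddCommGroup E] [InnerProductSpace ℝ E] [FiniteDimensional ℝ E]

/-- The open unit tube over the part of the plane `a + W` lying in `A`: the points whose orthogonal
projection to `a + W` belongs to `A` and whose distance to `a + W` is less than `1`. Its volume is a
substitute for the Hausdorff measure of `A ∩ (a + W)`. -/
def unitTube (W : Submodule ℝ E) (a : E) (A : Set E) : Set E :=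
  {z | a + W.starProjection (z - a) ∈ A ∧ ‖Wᗮ.starProjection (z - a)‖ < 1}

variable [MeasurableSpace E] [BorelSpace E]

theorem unitTube_eq_preimage_prod (W : Submodule ℝ E) (a : E) (A : Set E) :
    unitTube W a A =
      W.measurableEquivProd a ⁻¹' (((fun w : W => a + (w : E)) ⁻¹' A) ×ˢ ball (0 : Wᗮ) 1) := by
  ext z
  simp [unitTube, -map_sub]

theorem volume_unitTube (W : Submodule ℝ E) (a : E) (A : Set E) :
    volume (unitTube W a A) =
      volume ((fun w : W => a + (w : E)) ⁻¹' A) * volume (ball (0 : Wᗮ) 1) := by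
  rw [unitTube_eq_preimage_prod, ← InnerProductSpace.euclideanHausdorffMeasure_eq_volume (V := E),
    (W.measurePreserving_measurableEquivProd a).measure_preimage_equiv, Measure.volume_eq_prod,
    Measure.prod_prod]

theorem euclideanHausdorffMeasure_inter_plane (W : Submodule ℝ E) (a : E) (A : Set E) :
    μHE[finrank ℝ W] (A ∩ {y | y - a ∈ W}) = volume ((fun w : W => a + (w : E)) ⁻¹' A) := by
  have isometry_param : Isometry fun w : W => a + (w : E) :=
    (isometry_add_left a).comp isometry_subtype_coe
  rw [← InnerProductSpace.euclideanHausdorffMeasure_eq_volume (V := W),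
    isometry_param.euclideanHausdorffMeasure_preimage, range_const_add_coe_submodule]

theorem volume_ball_eq_volume_ball_euclideanSpace (r : ℝ) :
    volume (ball (0 : E) r) = volume (ball (0 : EuclideanSpace ℝ (Fin (finrank ℝ E))) r) := by
  let e := (stdOrthonormalBasis ℝ E).repr
  rw [← e.measurePreserving.measure_preimage measurableSet_ball.nullMeasurableSet,
    e.preimage_ball, map_zero]

theorem euclideanHausdorffMeasure_inter_plane_eq_volume_unitTube_div
    (W : Submodule ℝ E) (a : E) (A : Set E) :
    μHE[finrank ℝ W] (A ∩ {y | y - a ∈ W}) =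
      volume (unitTube W a A) /
        volume (ball (0 : EuclideanSpace ℝ (Fin (finrank ℝ E - finrank ℝ W))) 1) := by
  have finrank_orthogonal : finrank ℝ Wᗮ = finrank ℝ E - finrank ℝ W := by
    rw [← W.finrank_add_finrank_orthogonal, Nat.add_sub_cancel_left]
  rw [volume_unitTube, euclideanHausdorffMeasure_inter_plane, ← finrank_orthogonal,
    ← volume_ball_eq_volume_ball_euclideanSpace,
    ENNReal.mul_div_cancel_right (measure_ball_pos _ _ one_pos).ne' measure_ball_lt_top.ne]

end UnitTube

theorem hausdorffMeasure_eq_inv_smul_euclideanHausdorffMeasure {X : Type*} [EMetricSpace X]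
    [MeasurableSpace X] [BorelSpace X] (d : ℕ) :
    (μH[(d : ℝ)] : Measure X) =
      (Measure.addHaarScalarFactor (volume : Measure (EuclideanSpace ℝ (Fin d))) μH[d])⁻¹ •
        μHE[d] := by
  rw [Measure.euclideanHausdorffMeasure_def,
    inv_smul_smul₀ (Measure.addHaarScalarFactor_volume_hausdorffMeasure_ne_zero d)]

theorem measurable_continuousLinearMap_apply {𝕜 X E F : Type*} [NontriviallyNormedField 𝕜]
    [MeasurableSpace X] [NormedAddCommGroup E] [NormedSpace 𝕜 E] [SecondCountableTopology E]
    [MeasurableSpace E] [OpensMeasurableSpace E] [NormedAddCommGroup F] [NormedSpace 𝕜 F]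
    [MeasurableSpace F] [BorelSpace F] {T : X → E →L[𝕜] F} {f : X → E}
    (hT : ∀ z, Measurable fun x => T x z) (hf : Measurable f) :
    Measurable fun x => T x (f x) := by
  have measurable_uncurry : Measurable (Function.uncurry fun z x => T x z) :=
    measurable_uncurry_of_continuous_of_measurable (fun x => (T x).continuous) hT
  exact measurable_uncurry.comp (hf.prodMk measurable_id)

section PlaneField

variable {E : Type*} [NormedAddCommGroup E] [InnerProductSpace ℝ E] [FiniteDimensional ℝ E]
  [MeasurableSpace E] [BorelSpace E] {X : Type*} [MeasurableSpace X]

theorem measurableSet_setOf_mem_unitTube {W : X → Submodule ℝ E} {a : X → E} {A : Set (X × E)}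
    (hW : ∀ z, Measurable fun x => (W x).starProjection z) (ha : Measurable a)
    (hA : MeasurableSet A) :
    MeasurableSet {p : X × E | p.2 ∈ unitTube (W p.1) (a p.1) (Prod.mk p.1 ⁻¹' A)} := by
  have ha' : Measurable fun p : X × E => a p.1 := ha.comp measurable_fst
  have measurable_sub : Measurable fun p : X × E => p.2 - a p.1 := measurable_snd.sub ha'
  have measurable_proj : Measurable fun p : X × E => (W p.1).starProjection (p.2 - a p.1) :=
    measurable_continuousLinearMap_apply (fun z => (hW z).comp measurable_fst) measurable_sub
  have measurable_foot :
      Measurable fun p : X × E => (p.1, a p.1 + (W p.1).starProjection (p.2 - a p.1)) :=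
    measurable_fst.prodMk (ha'.add measurable_proj)
  have measurable_dist :
      Measurable fun p : X × E => ‖(W p.1)ᗮ.starProjection (p.2 - a p.1)‖ := by
    simp only [Submodule.starProjection_orthogonal_val]
    exact (measurable_sub.sub measurable_proj).norm
  exact (measurable_foot hA).inter (measurableSet_lt measurable_dist measurable_const)

theorem measurable_hausdorff_plane_field_general {m : ℕ} {W : X → Submodule ℝ E} {a : X → E}
    {A : Set (X × E)} (hrank : ∀ x, Module.finrank ℝ (W x) = m)
    (hW : ∀ z, Measurable fun x => (W x).starProjection z) (ha : Measurable a)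
    (hA : MeasurableSet A) :
    Measurable fun x => μH[(m : ℝ)] (Prod.mk x ⁻¹' A ∩ {y | y - a x ∈ W x}) := by
  have measurable_volume :
      Measurable fun x => volume (unitTube (W x) (a x) (Prod.mk x ⁻¹' A)) :=
    measurable_measure_prodMk_left (measurableSet_setOf_mem_unitTube hW ha hA)
  have measure_eq (x : X) : μHE[m] (Prod.mk x ⁻¹' A ∩ {y | y - a x ∈ W x}) =
      volume (unitTube (W x) (a x) (Prod.mk x ⁻¹' A)) /
        volume (ball (0 : EuclideanSpace ℝ (Fin (Module.finrank ℝ E - m))) 1) := by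
    rw [← hrank x, euclideanHausdorffMeasure_inter_plane_eq_volume_unitTube_div]
  rw [hausdorffMeasure_eq_inv_smul_euclideanHausdorffMeasure]
  simp only [Measure.smul_apply, measure_eq]
  exact (measurable_volume.div_const _).const_smul _

end PlaneField

/-- For Borel `B ⊆ ℝⁿ` and a Borel measurable field of `m`-planes `W₀`,
the function `x ↦ ℋ^m(B ∩ (x + W₀(x)))` is Borel measurable. -/
theorem measurable_hausdorff_plane_field
    (n m : ℕ) (hm : 1 ≤ m) (hmn : m + 1 ≤ n)
    (B : Set (En n)) (hB : MeasurableSet B)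
    (W₀ : En n → Submodule ℝ (En n))
    (hrank : ∀ x, Module.finrank ℝ (W₀ x) = m)
    (hmeas : Measurable fun x => projCLM (W₀ x)) :
    Measurable fun x : En n => μH[(m : ℝ)] (B ∩ {y | y - x ∈ W₀ x}) := by
  have hproj (z : En n) : Measurable fun x => (W₀ x).starProjection z :=
    hmeas.apply_continuousLinearMap z
  exact measurable_hausdorff_plane_field_general (A := Prod.snd ⁻¹' B) hrank hproj measurable_id
    (measurable_snd hB)
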